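/- For every n ≥ 2, there exists a countable family of pairwise disjoint measurable subsets of ℝ^n, each of Lebesgue measure at most 1 and of positive Lebesgue measure, whose union is all of ℝ^n, and whose limiting perimeter-per-volume ratio is at most the infimum of the limiting perimeter-per-volume ratios over all partitions of ℝ^n into countably many pairwise disjoint measurable regions of Lebesgue measure exactly 1. -/

import Mathlib

open MeasureTheory Set Metric Filter

/-- The perimeter-per-volume ratio at radius `r` of a countable family of regions in `ℝⁿ`. -/
noncomputable def perimVolRatio (n : ℕ) (R : ℕ → Set (EuclideanSpace ℝ (Fin n))) (r : ℝ) :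
    ENNReal :=
  μH[(n : ℝ) - 1] ((⋃ j, frontier (R j)) ∩ closedBall 0 r) /
    volume (closedBall (0 : EuclideanSpace ℝ (Fin n)) r)

/-- The limiting perimeter-per-volume ratio: `limsup_{r → ∞}` of the ratio at radius `r`. -/
noncomputable def limitRatio (n : ℕ) (R : ℕ → Set (EuclideanSpace ℝ (Fin n))) : ENNReal :=
  Filter.limsup (perimVolRatio n R) Filter.atTop

/-- A partition of `ℝⁿ` into unit volumes: countably many pairwise disjoint measurable sets,
each of Lebesgue measure 1, whose union is all of `ℝⁿ`. -/
def IsUnitPartition (n : ℕ) (R : ℕ → Set (EuclideanSpace ℝ (Fin n))) : Prop :=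
  Pairwise (Function.onFun Disjoint R) ∧ (∀ j, MeasurableSet (R j)) ∧
    (∀ j, volume (R j) = 1) ∧ (⋃ j, R j) = univ

theorem sphere_fin (m : ℕ) : μH[(m:ℝ)] (sphere (0 : EuclideanSpace ℝ (Fin (m+1))) 1) < ⊤ := by
  let f : Fin (m+1) → ℝ → (Fin m → ℝ) → EuclideanSpace ℝ (Fin (m+1)) :=
    fun i s y => WithLp.toLp 2 (i.insertNth s y)
  let g : Fin (m+1) → ℝ → (Fin m → ℝ) → EuclideanSpace ℝ (Fin (m+1)) :=
    fun i s y => ‖f i s y‖⁻¹ • f i s y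
  have hf : ∀ i s, ContDiff ℝ 1 (f i s) := by
    intro i s
    rw [contDiff_euclidean]
    intro j
    rcases Fin.eq_self_or_eq_succAbove i j with rfl | ⟨k, rfl⟩
    · simpa [f] using contDiff_const
    · simpa [f] using contDiff_apply ℝ ℝ k
  have hf0 : ∀ i s, s ≠ 0 → ∀ y, f i s y ≠ 0 := by
    intro i s hs y h
    apply hs
    have : (f i s y) i = 0 := by rw [h]; rfl
    simpa [f] using this
  have hg : ∀ i s, s ≠ 0 → μH[(m:ℝ)] (g i s '' Icc (fun _ => -1) (fun _ => 1)) < ⊤ := by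
    intro i s hs
    have h1 : ContDiff ℝ 1 (g i s) :=
      (((hf i s).norm ℝ (hf0 i s hs)).inv (fun y => norm_ne_zero_iff.2 (hf0 i s hs y))).smul (hf i s)
    obtain ⟨K, hK⟩ := (h1.locallyLipschitz.locallyLipschitzOn (s := Icc (fun _ => -1) (fun _ => 1))).exists_lipschitzOnWith_of_compact isCompact_Icc
    refine (hK.hausdorffMeasure_image_le (d := m) (by positivity)).trans_lt ?_
    have := @hausdorffMeasure_pi_real (Fin m) _
    rw [Fintype.card_fin] at this
    rw [this]
    refine ENNReal.mul_lt_top (by simp) isCompact_Icc.measure_lt_top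
  refine (measure_mono (t := ⋃ i, (g i 1 '' Icc (fun _ => -1) (fun _ => 1) ∪ g i (-1) '' Icc (fun _ => -1) (fun _ => 1))) ?_).trans_lt ?_
  · intro x hx
    have hx1 : ‖x‖ = 1 := by simpa using hx
    obtain ⟨i, -, hi⟩ := Finset.exists_max_image Finset.univ (fun i => |x i|) Finset.univ_nonempty
    have hxi : x i ≠ 0 := by
      intro h
      have : x = 0 := by
        ext j
        have := hi j (Finset.mem_univ _)
        simp [h] at this
        simpa using this
      simp [this] at hx1
    have ha : 0 < |x i| := abs_pos.2 hxi
    have key : ∀ s : ℝ, s = x i / |x i| → x ∈ g i s '' Icc (fun _ => -1) (fun _ => 1) := by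
      intro s hs
      refine ⟨fun k => x (i.succAbove k) / |x i|, ?_, ?_⟩
      · have : ∀ k, abs (x (i.succAbove k) / abs (x i)) ≤ 1 := by
          intro k
          rw [abs_div, abs_abs, div_le_one ha]
          exact hi _ (Finset.mem_univ _)
        exact ⟨fun k => (abs_le.1 (this k)).1, fun k => (abs_le.1 (this k)).2⟩
      · have e : f i s (fun k => x (i.succAbove k) / |x i|) = |x i|⁻¹ • x := by
          ext j
          rcases Fin.eq_self_or_eq_succAbove i j with rfl | ⟨k, rfl⟩
          · simp [f, hs, div_eq_inv_mul]
          · simp [f, div_eq_inv_mul]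
        simp only [g, e, norm_smul, hx1, smul_smul]
        simp [hxi]
    refine mem_iUnion.2 ⟨i, ?_⟩
    rcases lt_or_gt_of_ne hxi with h | h
    · right; apply key; rw [abs_of_neg h]; field_simp
    · left; apply key; rw [abs_of_pos h]; field_simp
  · refine (measure_iUnion_le _).trans_lt ?_
    rw [tsum_fintype]
    refine ENNReal.sum_lt_top.2 fun i _ => ?_
    exact (measure_union_le _ _).trans_lt (ENNReal.add_lt_top.2 ⟨hg i 1 (by norm_num), hg i (-1) (by norm_num)⟩)

open scoped Pointwise in
theorem sphere_le (m : ℕ) (r : ℝ) (hr : 0 < r) : μH[(m:ℝ)] (sphere (0 : EuclideanSpace ℝ (Fin (m+1))) r) ≤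
    ENNReal.ofReal (r^m) * μH[(m:ℝ)] (sphere (0 : EuclideanSpace ℝ (Fin (m+1))) 1) := by
  have : sphere (0 : EuclideanSpace ℝ (Fin (m+1))) r = r • sphere (0 : EuclideanSpace ℝ (Fin (m+1))) 1 := by
    rw [smul_sphere' hr.ne']; simp [abs_of_pos hr]
  rw [this, Measure.hausdorffMeasure_smul₀ (by positivity) hr.ne', ENNReal.smul_def, smul_eq_mul]
  gcongr
  rw [NNReal.rpow_natCast]
  simp only [ENNReal.coe_pow, ENNReal.ofReal_pow hr.le]
  gcongr
  rw [← enorm_eq_nnnorm, Real.enorm_of_nonneg hr.le]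

theorem cubes (n : ℕ) (hn : 2 ≤ n) : ∃ R : ℕ → Set (EuclideanSpace ℝ (Fin n)), Pairwise (Function.onFun Disjoint R) ∧ (∀ j, MeasurableSet (R j)) ∧
    (∀ j, volume (R j) = 1) ∧ (⋃ j, R j) = univ := by
  have : Nonempty (Fin n) := ⟨⟨0, by omega⟩⟩
  obtain ⟨e⟩ := nonempty_equiv_of_countable (α := ℕ) (β := Fin n → ℤ)
  let fl : EuclideanSpace ℝ (Fin n) → (Fin n → ℤ) := fun x i => ⌊x i⌋
  have hfl : Measurable fl := by
    refine measurable_pi_lambda _ fun i => Int.measurable_floor.comp ?_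
    fun_prop
  refine ⟨fun j => fl ⁻¹' {e j}, ?_, fun j => hfl (measurableSet_singleton _), ?_, ?_⟩
  · intro i j hij
    refine Disjoint.preimage _ ?_
    simpa using hij
  · intro j
    have : fl ⁻¹' {e j} = (MeasurableEquiv.toLp 2 (Fin n → ℝ)).symm ⁻¹' (Set.pi univ fun i => Ico (e j i : ℝ) (e j i + 1)) := by
      ext x
      simp [fl, funext_iff, Int.floor_eq_iff]
    change volume (fl ⁻¹' {e j}) = 1
    rw [this, (EuclideanSpace.volume_preserving_symm_measurableEquiv_toLp (Fin n)).measure_preimage_equiv, Real.volume_pi_Ico]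
    simp
  · rw [← preimage_iUnion]
    ext x
    simp only [mem_preimage, mem_iUnion, mem_singleton_iff, mem_univ, iff_true]
    exact ⟨e.symm (fl x), by simp⟩

theorem frontier_union {X : Type*} [TopologicalSpace X] (S : ℕ → Set X)
    (hd : Pairwise (Function.onFun Disjoint S)) (hu : (⋃ j, S j) = univ) :
    (⋃ j, frontier (S j)) = (⋃ j, interior (S j))ᶜ := by
  ext x
  simp only [mem_iUnion, mem_compl_iff, not_exists]
  constructor
  · rintro ⟨j, hj⟩ i hi
    by_cases hij : i = j
    · subst hij; exact hj.2 hi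
    · have := (hd hij).mono_left interior_subset
      have h2 := this.closure_right isOpen_interior
      exact h2.le_bot ⟨hi, hj.1⟩
  · intro h
    have : x ∈ ⋃ j, S j := by rw [hu]; trivial
    obtain ⟨j, hj⟩ := mem_iUnion.1 this
    exact ⟨j, subset_closure hj, h j⟩

theorem vol_cb (m : ℕ) (r : ℝ) (hr : 0 ≤ r) :
    volume (closedBall (0 : EuclideanSpace ℝ (Fin (m+1))) r) =
      ENNReal.ofReal r ^ m * ENNReal.ofReal r * volume (ball (0 : EuclideanSpace ℝ (Fin (m+1))) 1) := by
  rw [Measure.addHaar_closedBall _ _ hr, finrank_euclideanSpace_fin, ENNReal.ofReal_pow hr, pow_succ]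

theorem ev_ge (K : ENNReal) (hK : K ≠ ⊤) : ∀ᶠ r : ℝ in atTop, K ≤ ENNReal.ofReal r := by
  filter_upwards [eventually_ge_atTop K.toReal] with r hr
  rw [← ENNReal.ofReal_toReal hK]
  exact ENNReal.ofReal_le_ofReal hr

/-- analytic estimates: sphere is negligible -/
theorem ev_sphere (m : ℕ) (ε : ENNReal) (h0 : ε ≠ 0) (h1 : ε ≠ ⊤) :
    ∀ᶠ r : ℝ in atTop, μH[(m:ℝ)] (sphere (0 : EuclideanSpace ℝ (Fin (m+1))) r) ≤
      ε * volume (closedBall (0 : EuclideanSpace ℝ (Fin (m+1))) r) := by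
  set c := μH[(m:ℝ)] (sphere (0 : EuclideanSpace ℝ (Fin (m+1))) 1) with hc
  set w := volume (ball (0 : EuclideanSpace ℝ (Fin (m+1))) 1) with hw
  have hc' : c ≠ ⊤ := (sphere_fin m).ne
  have hw0 : w ≠ 0 := (measure_ball_pos _ _ one_pos).ne'
  have hw1 : w ≠ ⊤ := measure_ball_lt_top.ne
  have hεw : ε * w ≠ 0 := mul_ne_zero h0 hw0
  have hεw' : ε * w ≠ ⊤ := ENNReal.mul_ne_top h1 hw1
  filter_upwards [ev_ge (c / (ε * w)) (ENNReal.div_ne_top hc' hεw), eventually_gt_atTop 0] with r hr hr0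
  have h2 : c ≤ ENNReal.ofReal r * (ε * w) := by
    rwa [ENNReal.div_le_iff hεw hεw'] at hr
  calc _ ≤ ENNReal.ofReal (r^m) * c := sphere_le m r hr0
    _ ≤ ENNReal.ofReal r ^ m * (ENNReal.ofReal r * (ε * w)) := by
      rw [ENNReal.ofReal_pow hr0.le]; gcongr
    _ = _ := by rw [vol_cb m r hr0.le, ← hw]; ring

theorem ev_vol (m : ℕ) (ε K : ENNReal) (h0 : ε ≠ 0) (h1 : ε ≠ ⊤) (hK : K ≠ ⊤) :
    ∀ᶠ r : ℝ in atTop, K ≤ ε * volume (closedBall (0 : EuclideanSpace ℝ (Fin (m+1))) r) := by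
  set w := volume (ball (0 : EuclideanSpace ℝ (Fin (m+1))) 1) with hw
  have hw0 : w ≠ 0 := (measure_ball_pos _ _ one_pos).ne'
  have hw1 : w ≠ ⊤ := measure_ball_lt_top.ne
  have hεw : ε * w ≠ 0 := mul_ne_zero h0 hw0
  have hεw' : ε * w ≠ ⊤ := ENNReal.mul_ne_top h1 hw1
  filter_upwards [ev_ge (K / (ε * w)) (ENNReal.div_ne_top hK hεw), eventually_ge_atTop 1] with r hr hr0
  have h2 : K ≤ ENNReal.ofReal r * (ε * w) := by
    rwa [ENNReal.div_le_iff hεw hεw'] at hr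
  have h3 : 1 ≤ ENNReal.ofReal r ^ m := one_le_pow₀ (by simpa using hr0)
  calc K ≤ 1 * (ENNReal.ofReal r * (ε * w)) := by rwa [one_mul]
    _ ≤ ENNReal.ofReal r ^ m * (ENNReal.ofReal r * (ε * w)) := by gcongr
    _ = _ := by rw [vol_cb m r (by linarith), ← hw]; ring

/-- Gluing partitions along concentric spheres. -/
theorem glue (n : ℕ) (hn : 2 ≤ n) (S : ℕ → ℕ → Set (EuclideanSpace ℝ (Fin n)))
    (hS : ∀ k, IsUnitPartition n (S k)) (ρ : ℕ → ℝ) (hρ : StrictMono ρ)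
    (hρt : Tendsto ρ atTop atTop) :
    ∃ R : ℕ → Set (EuclideanSpace ℝ (Fin n)),
      Pairwise (Function.onFun Disjoint R) ∧ (∀ j, MeasurableSet (R j)) ∧
      (∀ j, volume (R j) ≤ 1) ∧ (∀ j, 0 < volume (R j)) ∧ (⋃ j, R j) = univ ∧
      (∀ k x, (k = 0 ∨ ρ k < ‖x‖) → ‖x‖ < ρ (k+1) → x ∈ (⋃ j, frontier (R j)) →
        x ∈ ⋃ j, frontier (S k j)) := by
  classical
  have : Nonempty (Fin n) := ⟨⟨0, by omega⟩⟩
  let A : ℕ → Set (EuclideanSpace ℝ (Fin n)) := fun k => {x | (k = 0 ∨ ρ k ≤ ‖x‖) ∧ ‖x‖ < ρ (k+1)}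
  have hAm : ∀ k, MeasurableSet (A k) := by
    intro k
    refine MeasurableSet.inter ?_ (measurableSet_lt measurable_norm measurable_const)
    exact (MeasurableSet.const _).union (measurableSet_le measurable_const measurable_norm)
  have hAu : ∀ x, ∃ k, x ∈ A k := by
    intro x
    have hex : ∃ k, ‖x‖ < ρ (k+1) := by
      obtain ⟨k, hk⟩ := (hρt.eventually_gt_atTop ‖x‖).exists
      exact ⟨k, hk.trans (hρ (Nat.lt_succ_self k))⟩
    refine ⟨Nat.find hex, ?_, Nat.find_spec hex⟩
    rcases h : Nat.find hex with _ | k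
    · left; rfl
    · right
      exact not_lt.1 (Nat.find_min hex (m := k) (by omega))
  have hAd : ∀ k l, k < l → ∀ x, x ∈ A k → x ∈ A l → False := by
    intro k l hkl x hk hl
    have h1 : ρ (k+1) ≤ ρ l := hρ.monotone hkl
    rcases hl.1 with h | h
    · omega
    · have := hk.2; linarith
  let G : ℕ × ℕ → Set (EuclideanSpace ℝ (Fin n)) := fun p => S p.1 p.2 ∩ A p.1
  have hGm : ∀ p, MeasurableSet (G p) := fun p => ((hS p.1).2.1 p.2).inter (hAm _)
  have hGd : ∀ p q x, x ∈ G p → x ∈ G q → p = q := by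
    rintro ⟨k, i⟩ ⟨l, j⟩ x hp hq
    have hkl : k = l := by
      rcases lt_trichotomy k l with h | h | h
      · exact (hAd _ _ h x hp.2 hq.2).elim
      · exact h
      · exact (hAd _ _ h x hq.2 hp.2).elim
    subst hkl
    by_contra hne
    have : i ≠ j := fun h => hne (by rw [h])
    exact ((hS k).1 this).le_bot ⟨hp.1, hq.1⟩
  have hGu : ∀ x, ∃ p, x ∈ G p := by
    intro x
    obtain ⟨k, hk⟩ := hAu x
    have : x ∈ ⋃ j, S k j := by rw [(hS k).2.2.2]; trivial
    obtain ⟨j, hj⟩ := mem_iUnion.1 this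
    exact ⟨(k, j), hj, hk⟩
  have hG1 : ∀ p, volume (G p) ≤ 1 := fun p =>
    (measure_mono inter_subset_left).trans ((hS p.1).2.2.1 p.2).le
  let I : Set (ℕ × ℕ) := {p | 0 < volume (G p)}
  let N : Set (EuclideanSpace ℝ (Fin n)) := ⋃ p ∈ Iᶜ, G p
  have hN0 : volume N = 0 := by
    refine (measure_biUnion_null_iff (to_countable _)).2 fun p hp => ?_
    simpa [I] using hp
  have hNm : MeasurableSet N := MeasurableSet.biUnion (to_countable _) fun p _ => hGm p
  have hI : I.Infinite := by
    intro hfin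
    have hsub : (univ : Set (EuclideanSpace ℝ (Fin n))) ⊆ (⋃ p ∈ hfin.toFinset, G p) ∪ N := by
      intro x _
      obtain ⟨p, hp⟩ := hGu x
      by_cases h : p ∈ I
      · left; exact mem_biUnion (by simpa using h) hp
      · right; exact mem_biUnion h hp
    have h1 := (measure_mono (μ := volume) hsub).trans (measure_union_le _ _)
    rw [measure_univ_of_isAddLeftInvariant, hN0, add_zero] at h1
    have h2 := h1.trans (measure_biUnion_finset_le _ _)
    have h3 := h2.trans (Finset.sum_le_sum fun p _ => hG1 p)
    simp at h3
  have : Infinite I := hI.to_subtype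
  obtain ⟨e⟩ := nonempty_equiv_of_countable (α := ℕ) (β := I)
  let T : ℕ → Set (EuclideanSpace ℝ (Fin n)) := fun i => if i = 0 then N else ∅
  have hT0 : ∀ i, volume (T i) = 0 := by
    intro i; by_cases h : i = 0 <;> simp [T, h, hN0]
  have hTN : ∀ i, T i ⊆ N := by
    intro i; by_cases h : i = 0 <;> simp [T, h]
  have hTm : ∀ i, MeasurableSet (T i) := by
    intro i; by_cases h : i = 0 <;> simp [T, h, hNm]
  let R : ℕ → Set (EuclideanSpace ℝ (Fin n)) := fun i => G (e i) ∪ T i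
  have hvol : ∀ i, volume (R i) = volume (G (e i)) := fun i =>
    le_antisymm ((measure_union_le _ _).trans (by rw [hT0 i, add_zero])) (measure_mono subset_union_left)
  have hGN : ∀ i x, x ∈ G (e i) → x ∈ N → False := by
    intro i x hx hxN
    obtain ⟨p, hp, hxp⟩ := mem_iUnion₂.1 hxN
    have := hGd _ _ x hx hxp
    exact hp (this ▸ (e i).2)
  have hRd : Pairwise (Function.onFun Disjoint R) := by
    intro i j hij
    refine Set.disjoint_left.2 ?_
    rintro x (hi | hi) (hj | hj)
    · exact hij (e.injective (Subtype.ext (hGd _ _ x hi hj)))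
    · exact hGN i x hi (hTN _ hj)
    · exact hGN j x hj (hTN _ hi)
    · by_cases h : i = 0
      · have : j ≠ 0 := fun h' => hij (h.trans h'.symm)
        simp [T, this] at hj
      · simp [T, h] at hi
  have hRu : (⋃ j, R j) = univ := by
    refine eq_univ_of_forall fun x => ?_
    obtain ⟨p, hp⟩ := hGu x
    by_cases h : p ∈ I
    · refine mem_iUnion.2 ⟨e.symm ⟨p, h⟩, Or.inl ?_⟩
      simpa using hp
    · refine mem_iUnion.2 ⟨0, Or.inr ?_⟩
      simp only [T, if_true]
      exact mem_biUnion h hp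
  refine ⟨R, hRd, fun i => (hGm _).union (hTm i), fun i => (hvol i).trans_le (hG1 _),
    fun i => (hvol i).symm ▸ (e i).2, hRu, ?_⟩
  intro k x hk hk' hx
  rw [frontier_union R hRd hRu] at hx
  rw [frontier_union (S k) (hS k).1 (hS k).2.2.2]
  intro hx'
  apply hx
  obtain ⟨j, hj⟩ := mem_iUnion.1 hx'
  let U : Set (EuclideanSpace ℝ (Fin n)) := {x | (k = 0 ∨ ρ k < ‖x‖) ∧ ‖x‖ < ρ (k+1)}
  have hU : IsOpen U := by
    refine IsOpen.inter ?_ (isOpen_lt continuous_norm continuous_const)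
    exact isOpen_const.union (isOpen_lt continuous_const continuous_norm)
  have hO : IsOpen (interior (S k j) ∩ U) := isOpen_interior.inter hU
  have hsub : interior (S k j) ∩ U ⊆ G (k, j) := by
    rintro y ⟨hy1, hy2, hy3⟩
    exact ⟨interior_subset hy1, hy2.imp id le_of_lt, hy3⟩
  have hxO : x ∈ interior (S k j) ∩ U := ⟨hj, hk, hk'⟩
  have hpI : (k, j) ∈ I := (hO.measure_pos volume ⟨x, hxO⟩).trans_le (measure_mono hsub)
  refine mem_iUnion.2 ⟨e.symm ⟨_, hpI⟩, ?_⟩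
  refine interior_maximal ?_ hO hxO
  refine hsub.trans ?_
  have : G (e (e.symm ⟨(k, j), hpI⟩)) = G (k, j) := by simp
  rw [← this]
  exact subset_union_left

/-- Numerical part: choice of radii. -/
theorem radii (C : ENNReal) (hC : C ≠ ⊤) (m : ℕ) (V : ℝ → ENNReal)
    (hV : V = fun r => volume (closedBall (0 : EuclideanSpace ℝ (Fin (m+1))) r))
    (P : ℕ → ℝ → ENNReal) (ε : ℕ → ENNReal) (hε0 : ∀ k, ε k ≠ 0) (hε1 : ∀ k, ε k ≠ ⊤)
    (hlow : ∀ k, C ≤ limsup (fun r => P k r / V r) atTop)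
    (hupp : ∀ k, limsup (fun r => P k r / V r) atTop < C + ε k) :
    ∃ ρ : ℕ → ℝ, StrictMono ρ ∧ Tendsto ρ atTop atTop ∧ (∀ k, 0 < ρ k) ∧
      (∀ k r, ρ k ≤ r → P k r ≤ (C + ε k) * V r) ∧
      (∀ k, C * V (ρ k) ≤ P k (ρ k) + ε k * V (ρ k)) ∧
      (∀ k, μH[(m:ℝ)] (sphere (0 : EuclideanSpace ℝ (Fin (m+1))) (ρ k)) ≤ ε k * V (ρ k)) ∧
      (∀ k, 7 * V (ρ k) ≤ ε (k+1) * V (ρ (k+1))) := by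
  have hV0 : ∀ r, 0 < r → V r ≠ 0 := fun r hr => by
    rw [hV]; exact (measure_closedBall_pos _ _ hr).ne'
  have hV1 : ∀ r, V r ≠ ⊤ := fun r => by
    rw [hV]; exact measure_closedBall_lt_top.ne
  have key : ∀ k s, ∃ r, s + 1 ≤ r ∧ 0 < r ∧ (∀ r', r ≤ r' → P k r' ≤ (C + ε k) * V r') ∧
      C * V r ≤ P k r + ε k * V r ∧
      μH[(m:ℝ)] (sphere (0 : EuclideanSpace ℝ (Fin (m+1))) r) ≤ ε k * V r ∧
      7 * V s ≤ ε k * V r := by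
    intro k s
    have e1 : ∀ᶠ r in atTop, ∀ r', r ≤ r' → P k r' ≤ (C + ε k) * V r' := by
      have h := eventually_lt_of_limsup_lt (hupp k)
      obtain ⟨a, ha⟩ := eventually_atTop.1 (h.and (eventually_gt_atTop 0))
      filter_upwards [eventually_ge_atTop a] with r hr r' hr'
      obtain ⟨h1, h2⟩ := ha r' (hr.trans hr')
      exact (ENNReal.div_le_iff (hV0 _ h2) (hV1 _)).1 h1.le
    have e2 : ∃ᶠ r in atTop, C ≤ P k r / V r + ε k := by
      intro h
      have h1 : ∀ᶠ r in atTop, P k r / V r ≤ C - ε k := by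
        filter_upwards [h] with r hr
        exact ENNReal.le_sub_of_add_le_right (hε1 k) (not_le.1 hr).le
      have h2 : limsup (fun r => P k r / V r) atTop ≤ C - ε k := limsup_le_of_le (by isBoundedDefault) h1
      have h3 : C ≤ C - ε k := (hlow k).trans h2
      obtain ⟨r, hr⟩ := h.exists
      have hC0 : C ≠ 0 := by rintro rfl; simp at hr
      exact absurd (ENNReal.sub_lt_self hC hC0 (hε0 k)) (not_lt.2 h3)
    have e3 := ev_sphere m (ε k) (hε0 k) (hε1 k)
    have e4 := ev_vol m (ε k) (7 * V s) (hε0 k) (hε1 k) (ENNReal.mul_ne_top (by simp) (hV1 s))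
    obtain ⟨r, h2, h1, h3, h4, h5, h6⟩ := (e2.and_eventually (e1.and (e3.and (e4.and
      ((eventually_ge_atTop (s+1)).and (eventually_gt_atTop 0)))))).exists
    refine ⟨r, h5, h6, h1, ?_, by rw [hV]; exact h3, by rw [hV] at h4 ⊢; exact h4⟩
    calc C * V r ≤ (P k r / V r + ε k) * V r := by gcongr
      _ = _ := by rw [add_mul, ENNReal.div_mul_cancel (hV0 r h6) (hV1 r)]
  choose φ h1 h2 h3 h4 h5 h6 using key
  let ρ : ℕ → ℝ := fun k => Nat.rec (φ 0 0) (fun k s => φ (k+1) s) k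
  have hρ : ∀ k, ∃ s, ρ k = φ k s := by
    rintro (_ | k)
    · exact ⟨0, rfl⟩
    · exact ⟨ρ k, rfl⟩
  have hρs : ∀ k, ρ (k+1) = φ (k+1) (ρ k) := fun k => rfl
  have hstep : ∀ k, ρ k + 1 ≤ ρ (k+1) := fun k => h1 _ _
  have hpos : ∀ k, 0 < ρ k := by
    intro k; obtain ⟨s, hs⟩ := hρ k; rw [hs]; exact h2 _ _
  refine ⟨ρ, strictMono_nat_of_lt_succ fun k => by linarith [hstep k], ?_, hpos, ?_, ?_, ?_, ?_⟩
  · refine tendsto_atTop_mono (f := fun k : ℕ => (k : ℝ)) ?_ tendsto_natCast_atTop_atTop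
    intro k
    induction k with
    | zero => simpa using (hpos 0).le
    | succ k ih => push_cast; linarith [hstep k]
  · intro k; obtain ⟨s, hs⟩ := hρ k; rw [hs]; exact h3 _ _
  · intro k; obtain ⟨s, hs⟩ := hρ k; rw [hs]; exact h4 _ _
  · intro k; obtain ⟨s, hs⟩ := hρ k; rw [hs]; exact h5 _ _
  · intro k; exact h6 _ _

/-- There is a countable family of pairwise disjoint measurable regions of positive volume
at most 1 covering `ℝⁿ` whose limiting perimeter-per-volume ratio is at most the optimal
ratio over genuine unit-volume partitions. -/
theorem exists_subunit_cover_with_optimal_ratio (n : ℕ) (hn : 2 ≤ n) :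
    ∃ R : ℕ → Set (EuclideanSpace ℝ (Fin n)),
      Pairwise (Function.onFun Disjoint R) ∧ (∀ j, MeasurableSet (R j)) ∧
      (∀ j, volume (R j) ≤ 1) ∧ (∀ j, 0 < volume (R j)) ∧ (⋃ j, R j) = univ ∧
      limitRatio n R ≤
        ⨅ (S : ℕ → Set (EuclideanSpace ℝ (Fin n))) (_ : IsUnitPartition n S),
          limitRatio n S := by
  obtain ⟨m, rfl⟩ : ∃ m, n = m + 1 := ⟨n - 1, by omega⟩
  set C := ⨅ (S : ℕ → Set (EuclideanSpace ℝ (Fin (m+1)))) (_ : IsUnitPartition (m+1) S),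
          limitRatio (m+1) S with hCdef
  by_cases hC : C = ⊤
  · obtain ⟨R, h1, h2, h3, h4⟩ := cubes (m+1) hn
    exact ⟨R, h1, h2, fun j => (h3 j).le, fun j => by rw [h3 j]; exact one_pos, h4, by rw [hC]; exact le_top⟩
  let ε : ℕ → ENNReal := fun k => 2⁻¹ ^ k
  have hε0 : ∀ k, ε k ≠ 0 := fun k => pow_ne_zero _ (by simp)
  have hε1 : ∀ k, ε k ≠ ⊤ := fun k => ENNReal.pow_ne_top (by simp)
  have hεs : ∀ k, ε k = 2 * ε (k+1) := by
    intro k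
    simp only [ε, pow_succ]
    rw [mul_comm, mul_assoc, ENNReal.inv_mul_cancel (by simp) (by simp), mul_one]
  have hεle : ∀ k, ε k ≤ 1 := fun k => pow_le_one₀ (by simp) (by simp)
  have hεanti : Antitone ε := antitone_nat_of_succ_le fun k => by
    rw [hεs k, two_mul]; exact le_self_add
  have hex : ∀ k, ∃ S, IsUnitPartition (m+1) S ∧ limitRatio (m+1) S < C + ε k := by
    intro k
    have h : C < C + ε k := ENNReal.lt_add_right hC (hε0 k)
    rw [hCdef] at h
    simp only [iInf_lt_iff] at h
    obtain ⟨S, h1, h2⟩ := h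
    exact ⟨S, h1, h2⟩
  choose S hS hSlt using hex
  have hdim : ((m + 1 : ℕ) : ℝ) - 1 = m := by push_cast; ring
  let V : ℝ → ENNReal := fun r => volume (closedBall (0 : EuclideanSpace ℝ (Fin (m+1))) r)
  let P : ℕ → ℝ → ENNReal := fun k r => μH[(m : ℝ)] ((⋃ j, frontier (S k j)) ∩ closedBall 0 r)
  have hP : ∀ k, limitRatio (m+1) (S k) = limsup (fun r => P k r / V r) atTop := by
    intro k
    unfold limitRatio
    congr 1
    funext r
    simp only [perimVolRatio, hdim, P, V]
  obtain ⟨ρ, hρ, hρt, hρ0, hup, hlo, hsp, hgr⟩ := radii C hC m V rfl P ε hε0 hε1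
    (fun k => by rw [← hP]; exact iInf₂_le _ (hS k)) (fun k => by rw [← hP]; exact hSlt k)
  obtain ⟨R, h1, h2, h3, h4, h5, hR⟩ := glue (m+1) hn S hS ρ hρ hρt
  refine ⟨R, h1, h2, h3, h4, h5, ?_⟩
  let H : ℝ → ENNReal := fun r => μH[(m : ℝ)] ((⋃ j, frontier (R j)) ∩ closedBall 0 r)
  have hV0 : ∀ r, 0 < r → V r ≠ 0 := fun r hr => (measure_closedBall_pos _ _ hr).ne'
  have hV1 : ∀ r, V r ≠ ⊤ := fun r => measure_closedBall_lt_top.ne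
  have hVm : ∀ r s, r ≤ s → V r ≤ V s := fun r s h => measure_mono (closedBall_subset_closedBall h)
  have step : ∀ k r, ρ k ≤ r → r ≤ ρ (k+1) → H r + P k (ρ k) ≤ H (ρ k) + P k r +
      μH[(m : ℝ)] (sphere (0 : EuclideanSpace ℝ (Fin (m+1))) (ρ (k+1)) ∩ closedBall 0 r) := by
    intro k r hr1 hr2
    have e1 : H r ≤ H (ρ k) + μH[(m : ℝ)] (((⋃ j, frontier (S k j)) ∩ closedBall 0 r) \ closedBall 0 (ρ k)) +
        μH[(m : ℝ)] (sphere (0 : EuclideanSpace ℝ (Fin (m+1))) (ρ (k+1)) ∩ closedBall 0 r) := by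
      refine (measure_mono ?_).trans ((measure_union_le _ _).trans (add_le_add_left (measure_union_le _ _) _))
      rintro x ⟨hx, hxr⟩
      have hxr' : ‖x‖ ≤ r := by simpa using hxr
      by_cases hk : ‖x‖ ≤ ρ k
      · exact Or.inl (Or.inl ⟨hx, by simpa using hk⟩)
      · rcases lt_or_eq_of_le (hxr'.trans hr2) with h | h
        · exact Or.inl (Or.inr ⟨⟨hR k x (Or.inr (not_le.1 hk)) h hx, hxr⟩, by simpa using hk⟩)
        · exact Or.inr ⟨by simpa using h, hxr⟩
    have e2 : P k r = P k (ρ k) + μH[(m : ℝ)] (((⋃ j, frontier (S k j)) ∩ closedBall 0 r) \ closedBall 0 (ρ k)) := by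
      have := measure_inter_add_sdiff (μ := μH[(m:ℝ)]) ((⋃ j, frontier (S k j)) ∩ closedBall 0 r)
        (measurableSet_closedBall (x := (0 : EuclideanSpace ℝ (Fin (m+1)))) (ε := ρ k))
      rw [inter_assoc, inter_eq_self_of_subset_right (closedBall_subset_closedBall hr1)] at this
      exact this.symm
    rw [e2]
    refine (add_le_add_left e1 _).trans (le_of_eq ?_)
    ring
  have step2 : ∀ k r, ρ k ≤ r → r ≤ ρ (k+1) → H (ρ k) ≤ (C + 6 * ε k) * V (ρ k) →
      H r ≤ (C + ε k) * V r + 7 * ε k * V (ρ k) +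
      μH[(m : ℝ)] (sphere (0 : EuclideanSpace ℝ (Fin (m+1))) (ρ (k+1)) ∩ closedBall 0 r) := by
    intro k r hr1 hr2 hH
    set σ := μH[(m : ℝ)] (sphere (0 : EuclideanSpace ℝ (Fin (m+1))) (ρ (k+1)) ∩ closedBall 0 r)
    have hfin : C * V (ρ k) ≠ ⊤ := ENNReal.mul_ne_top hC (hV1 _)
    refine (ENNReal.add_le_add_iff_right hfin).1 ?_
    calc H r + C * V (ρ k) ≤ H r + (P k (ρ k) + ε k * V (ρ k)) := by gcongr; exact hlo k
      _ = (H r + P k (ρ k)) + ε k * V (ρ k) := by ring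
      _ ≤ (H (ρ k) + P k r + σ) + ε k * V (ρ k) := add_le_add_left (step k r hr1 hr2) _
      _ ≤ ((C + 6 * ε k) * V (ρ k) + (C + ε k) * V r + σ) + ε k * V (ρ k) := by
        gcongr; exact hup k r hr1
      _ = _ := by ring
  have inv : ∀ k, H (ρ k) ≤ (C + 6 * ε k) * V (ρ k) := by
    intro k
    induction k with
    | zero =>
      have : H (ρ 0) ≤ P 0 (ρ 0) := by
        refine measure_mono ?_
        rintro x ⟨hx, hxr⟩
        have hxr' : ‖x‖ ≤ ρ 0 := by simpa using hxr
        exact ⟨hR 0 x (Or.inl rfl) (hxr'.trans_lt (hρ (by simp))) hx, hxr⟩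
      refine this.trans ((hup 0 _ le_rfl).trans ?_)
      gcongr
      exact le_mul_of_one_le_left (by simp) (by norm_num)
    | succ k ih =>
      refine (step2 k _ (hρ.monotone (Nat.le_succ k)) le_rfl ih).trans ?_
      calc _ ≤ (C + ε k) * V (ρ (k+1)) + 7 * 1 * V (ρ k) + ε (k+1) * V (ρ (k+1)) := by
            gcongr
            · exact hεle k
            · exact (measure_mono inter_subset_left).trans (hsp _)
        _ ≤ (C + 2 * ε (k+1)) * V (ρ (k+1)) + ε (k+1) * V (ρ (k+1)) + ε (k+1) * V (ρ (k+1)) := by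
            rw [← hεs, mul_one]
            exact add_le_add_left (add_le_add_right (hgr k) _) _
        _ = (C + 4 * ε (k+1)) * V (ρ (k+1)) := by ring
        _ ≤ _ := by gcongr; norm_num
  have mid : ∀ k r, ρ k ≤ r → r < ρ (k+1) → H r ≤ (C + 8 * ε k) * V r := by
    intro k r hr1 hr2
    refine (step2 k r hr1 hr2.le (inv k)).trans ?_
    have : sphere (0 : EuclideanSpace ℝ (Fin (m+1))) (ρ (k+1)) ∩ closedBall 0 r = ∅ := by
      refine eq_empty_of_forall_notMem ?_
      rintro x ⟨hx1, hx2⟩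
      simp at hx1 hx2
      linarith
    rw [this, measure_empty, add_zero]
    calc _ ≤ (C + ε k) * V r + 7 * ε k * V r := by gcongr; exact hVm _ _ hr1
      _ = _ := by ring
  have fin : ∀ k, limitRatio (m+1) R ≤ C + 8 * ε k := by
    intro k
    refine limsup_le_of_le (by isBoundedDefault) ?_
    filter_upwards [eventually_ge_atTop (ρ k)] with r hr
    have hr0 : 0 < r := (hρ0 k).trans_le hr
    have : ∃ l, k ≤ l ∧ ρ l ≤ r ∧ r < ρ (l+1) := by
      have hex : ∃ l, r < ρ (l+1) := by
        obtain ⟨l, hl⟩ := (hρt.eventually_gt_atTop r).exists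
        exact ⟨l, hl.trans (hρ (Nat.lt_succ_self l))⟩
      classical
      have hs := Nat.find_spec hex
      have hkl : k ≤ Nat.find hex := by
        have := hρ.lt_iff_lt.1 (hr.trans_lt hs)
        omega
      refine ⟨Nat.find hex, hkl, ?_, hs⟩
      rcases h : Nat.find hex with _ | l
      · have : k = 0 := by omega
        exact this ▸ hr
      · exact not_lt.1 (Nat.find_min hex (m := l) (by omega))
    obtain ⟨l, hkl, hl1, hl2⟩ := this
    have hh : perimVolRatio (m+1) R r = H r / V r := by
      simp only [perimVolRatio, hdim, H, V]
    rw [hh, ENNReal.div_le_iff (hV0 r hr0) (hV1 r)]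
    refine (mid l r hl1 hl2).trans ?_
    gcongr
    exact hεanti hkl
  have hlim : Tendsto (fun k => C + 8 * ε k) atTop (nhds (C + 8 * 0)) := by
    refine tendsto_const_nhds.add (ENNReal.Tendsto.const_mul ?_ (Or.inr (by simp)))
    exact ENNReal.tendsto_pow_atTop_nhds_zero_of_lt_one (by simp)
  rw [mul_zero, add_zero] at hlim
  exact ge_of_tendsto' hlim fin
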